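/- arXiv:1807.07095 — 3 statements merged into one kernel-verified Lean document; each statement's English description precedes it below -/
import Mathlib

section
/- Let (Θ,I,p) be a statistical model with Σ_{i=1}^n p_i(θ) = 1 on Θ, and q ∈ P_+(I). Then the Euclidean gradient of the KL divergence satisfies ∇_θ D_KL(p(θ)‖q) = J_θp(θ)ᵀ log(p(θ)/q), where log(p(θ)/q) = (log(p_i(θ)/q_i))_{i=1}^n; in particular, since J_θp(θ)ᵀ 1⃗ = 0 for the all-ones vector 1⃗, the Riemannian gradient flow of D_KL(p(·)‖q) in the metric G_W is the ODE dθ/dt = −(J_θp(θ)ᵀ L(p(θ))^† J_θp(θ))^† J_θp(θ)ᵀ log(p(θ)/q) (Fokker–Planck equation on parameter space). -/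
open Matrix Set

namespace StatRicci

noncomputable section

open scoped Classical in
/-- The Moore–Penrose pseudoinverse of a square real matrix, characterized by the
four Penrose conditions. -/
def mpinv {k : Type*} [Fintype k] [DecidableEq k] (A : Matrix k k ℝ) : Matrix k k ℝ :=
  if h : ∃ B : Matrix k k ℝ,
      A * B * A = A ∧ B * A * B = B ∧ (A * B)ᵀ = A * B ∧ (B * A)ᵀ = B * A
  then h.choose else 0

/-- `q` is a strictly positive probability vector: `q ∈ P₊(I)`. -/
def posProb {n : ℕ} (q : Fin n → ℝ) : Prop :=
  (∀ i, 0 < q i) ∧ ∑ i, q i = 1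

/-- `ω` is a symmetric nonnegative weight matrix with zero diagonal:
`ω i j = ω j i > 0` on edges and `ω i j = 0` otherwise. -/
def isWeight {n : ℕ} (ω : Fin n → Fin n → ℝ) : Prop :=
  (∀ i j, ω i j = ω j i) ∧ (∀ i j, 0 ≤ ω i j) ∧ ∀ i, ω i i = 0

/-- The graph on `I` with edge set `{(i,j) : ω i j > 0}` is connected. -/
def isConn {n : ℕ} (ω : Fin n → Fin n → ℝ) : Prop :=
  (SimpleGraph.fromRel fun i j => 0 < ω i j).Connected

/-- Normalized volume form `d_i`. -/
def dvol {n : ℕ} (ω : Fin n → Fin n → ℝ) (i : Fin n) : ℝ :=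
  (∑ j, ω i j) / ∑ k, ∑ j, ω k j

/-- Edge weight `Λ(p)_{(i,j),(i,j)} = ((p i)/d_i + (p j)/d_j)/2`. -/
def lamW {n : ℕ} (ω : Fin n → Fin n → ℝ) (p : Fin n → ℝ) (i j : Fin n) : ℝ :=
  (p i / dvol ω i + p j / dvol ω j) / 2

/-- The weighted Laplacian `L(p) = Dᵀ Λ(p) D`, written entrywise as a sum over edges
(each unordered edge `(i,j)` counted once, with `j < i`; non-edges contribute `0`
since `ω i j = 0` there). -/
def Lap {n : ℕ} (ω : Fin n → Fin n → ℝ) (p : Fin n → ℝ) : Matrix (Fin n) (Fin n) ℝ :=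
  Matrix.of fun k l => ∑ i, ∑ j,
    if j < i then
      ω i j * lamW ω p i j *
        (((if k = i then (1 : ℝ) else 0) - if k = j then 1 else 0) *
          ((if l = i then (1 : ℝ) else 0) - if l = j then 1 else 0))
    else 0

/-- Partial derivative `∂_{θ_a} f (θ)`. -/
def pd {d : ℕ} (f : (Fin d → ℝ) → ℝ) (a : Fin d) (θ : Fin d → ℝ) : ℝ :=
  fderiv ℝ f θ (Pi.single a 1)

/-- Euclidean gradient `∇_θ f (θ)`. -/
def grad {d : ℕ} (f : (Fin d → ℝ) → ℝ) (θ : Fin d → ℝ) : Fin d → ℝ :=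
  fun a => pd f a θ

/-- Euclidean Hessian `∇²_θ f (θ)`. -/
def hess {d : ℕ} (f : (Fin d → ℝ) → ℝ) (θ : Fin d → ℝ) : Matrix (Fin d) (Fin d) ℝ :=
  Matrix.of fun a b => pd (pd f b) a θ

/-- Jacobian matrix `J_θ p(θ) ∈ ℝ^{n×d}`. -/
def Jac {n d : ℕ} (p : (Fin d → ℝ) → Fin n → ℝ) (θ : Fin d → ℝ) :
    Matrix (Fin n) (Fin d) ℝ :=
  Matrix.of fun i a => pd (fun x => p x i) a θ

/-- The Kullback–Leibler divergence `D_KL(p‖q)`. -/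
def KLdiv {n : ℕ} (p q : Fin n → ℝ) : ℝ :=
  ∑ i, p i * Real.log (p i / q i)

/-- Wasserstein metric tensor `G_W(θ) = J_θp(θ)ᵀ L(p(θ))† J_θp(θ)`. -/
def GW {n d : ℕ} (ω : Fin n → Fin n → ℝ) (p : (Fin d → ℝ) → Fin n → ℝ)
    (θ : Fin d → ℝ) : Matrix (Fin d) (Fin d) ℝ :=
  (Jac p θ)ᵀ * mpinv (Lap ω (p θ)) * Jac p θ

/-- Fisher–Rao metric tensor `G_F(θ)`. -/
def GF {n d : ℕ} (p : (Fin d → ℝ) → Fin n → ℝ) (θ : Fin d → ℝ) :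
    Matrix (Fin d) (Fin d) ℝ :=
  Matrix.of fun a b => ∑ i, (1 / p θ i) * pd (fun x => p x i) a θ * pd (fun x => p x i) b θ

/-- Christoffel symbol matrices `Γ^{W,k}(θ)` of `G_W`. -/
def Christoffel {n d : ℕ} (ω : Fin n → Fin n → ℝ) (p : (Fin d → ℝ) → Fin n → ℝ)
    (k : Fin d) (θ : Fin d → ℝ) : Matrix (Fin d) (Fin d) ℝ :=
  Matrix.of fun i j => (1 / 2) * ∑ l,
    (GW ω p θ)⁻¹ k l *
      (pd (fun x => GW ω p x j l) i θ + pd (fun x => GW ω p x i l) j θ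
        - pd (fun x => GW ω p x i j) l θ)

/-- Loewner-type ordering via quadratic forms: `matGE A B` means `A ⪰ B`. -/
def matGE {d : ℕ} (A B : Matrix (Fin d) (Fin d) ℝ) : Prop :=
  ∀ x : Fin d → ℝ, x ⬝ᵥ B.mulVec x ≤ x ⬝ᵥ A.mulVec x

/-- `γ` is a constant-speed geodesic of `(Θ, g_W)` with values in `S` on `[0,1]`. -/
def IsGeodesicOn {n d : ℕ} (ω : Fin n → Fin n → ℝ) (p : (Fin d → ℝ) → Fin n → ℝ)
    (S : Set (Fin d → ℝ)) (γ : ℝ → Fin d → ℝ) : Prop :=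
  ContDiff ℝ 2 γ ∧ (∀ t ∈ Icc (0 : ℝ) 1, γ t ∈ S) ∧
    ∀ t ∈ Icc (0 : ℝ) 1, ∀ k,
      deriv (fun s => deriv γ s k) t
        + ∑ i, ∑ j, Christoffel ω p k (γ t) i j * deriv γ t i * deriv γ t j = 0

/-- Squared Wasserstein distance `d_W(θ₀,θ₁)²` on parameter space. -/
def dW2 {n d : ℕ} (ω : Fin n → Fin n → ℝ) (p : (Fin d → ℝ) → Fin n → ℝ)
    (S : Set (Fin d → ℝ)) (θ0 θ1 : Fin d → ℝ) : ℝ :=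
  sInf {E : ℝ | ∃ γ : ℝ → Fin d → ℝ, ContDiff ℝ 1 γ ∧ (∀ t ∈ Icc (0 : ℝ) 1, γ t ∈ S) ∧
    γ 0 = θ0 ∧ γ 1 = θ1 ∧
    E = ∫ t in (0 : ℝ)..1, deriv γ t ⬝ᵥ (GW ω p (γ t)).mulVec (deriv γ t)}

/-- `Ric(Θ,I,p) ≥ κ`: geodesic `κ`-convexity of the KL divergence. -/
def RicGE {n d : ℕ} (ω : Fin n → Fin n → ℝ) (p : (Fin d → ℝ) → Fin n → ℝ)
    (S : Set (Fin d → ℝ)) (q : Fin n → ℝ) (κ : ℝ) : Prop :=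
  ∀ γ : ℝ → Fin d → ℝ, IsGeodesicOn ω p S γ →
    ∀ t ∈ Icc (0 : ℝ) 1,
      KLdiv (p (γ t)) q ≤ (1 - t) * KLdiv (p (γ 0)) q + t * KLdiv (p (γ 1)) q
        - κ / 2 * t * (1 - t) * dW2 ω p S (γ 0) (γ 1)

/-- Relative Fisher information `I(p(θ)‖q)`. -/
def relFisher {n d : ℕ} (ω : Fin n → Fin n → ℝ) (p : (Fin d → ℝ) → Fin n → ℝ)
    (q : Fin n → ℝ) (θ : Fin d → ℝ) : ℝ :=
  grad (fun x => KLdiv (p x) q) θ ⬝ᵥ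
    ((GW ω p θ)⁻¹).mulVec (grad (fun x => KLdiv (p x) q) θ)

/-- The RIW matrix
`G_F(θ) + Σ_a ∇²_θ p_a(θ)·log(p_a(θ)/q_a) − Σ_k ∂_{θ_k}D_KL(p(θ)‖q)·Γ^{W,k}(θ)`. -/
def RIWmat {n d : ℕ} (ω : Fin n → Fin n → ℝ) (p : (Fin d → ℝ) → Fin n → ℝ)
    (q : Fin n → ℝ) (θ : Fin d → ℝ) : Matrix (Fin d) (Fin d) ℝ :=
  GF p θ + (∑ i, Real.log (p θ i / q i) • hess (fun x => p x i) θ)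
    - ∑ k, pd (fun x => KLdiv (p x) q) k θ • Christoffel ω p k θ

/-- The covariant (Wasserstein) Hessian `H_W(θ)` of the KL divergence. -/
def HW {n d : ℕ} (ω : Fin n → Fin n → ℝ) (p : (Fin d → ℝ) → Fin n → ℝ)
    (q : Fin n → ℝ) (θ : Fin d → ℝ) : Matrix (Fin d) (Fin d) ℝ :=
  hess (fun x => KLdiv (p x) q) θ
    - ∑ k, pd (fun x => KLdiv (p x) q) k θ • Christoffel ω p k θ


/-- The Euclidean gradient of the KL divergence is
`∇_θ D_KL(p(θ)‖q) = J_θp(θ)ᵀ log(p(θ)/q)`; moreover `J_θp(θ)ᵀ 1⃗ = 0`, so that the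
Riemannian gradient flow of `D_KL(p(·)‖q)` in the metric `G_W`, i.e. the Fokker–Planck
equation on parameter space, has vector field
`−(J_θp(θ)ᵀ L(p(θ))† J_θp(θ))† J_θp(θ)ᵀ log(p(θ)/q)`. -/
theorem gradient_formula_and_fokker_planck {n d : ℕ} (ω : Fin n → Fin n → ℝ)
    (hω : isWeight ω) (hconn : isConn ω)
    (p : (Fin d → ℝ) → Fin n → ℝ) (hp : ContDiff ℝ 1 p)
    (hpos : ∀ θ, posProb (p θ))
    (hrank : ∀ θ, (Jac p θ).rank = d)
    (q : Fin n → ℝ) (hq : posProb q) :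
    ∀ θ : Fin d → ℝ,
      grad (fun x => KLdiv (p x) q) θ
          = (Jac p θ)ᵀ.mulVec (fun i => Real.log (p θ i / q i)) ∧
      (Jac p θ)ᵀ.mulVec (fun _ => (1 : ℝ)) = 0 ∧
      (mpinv (GW ω p θ)).mulVec (grad (fun x => KLdiv (p x) q) θ)
          = (mpinv ((Jac p θ)ᵀ * mpinv (Lap ω (p θ)) * Jac p θ)).mulVec
              ((Jac p θ)ᵀ.mulVec (fun i => Real.log (p θ i / q i))) := by
  intro θ
  have hd : ∀ i, DifferentiableAt ℝ (fun x => p x i) θ := fun i =>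
    differentiableAt_pi.1 (hp.differentiable (by norm_num) θ) i
  have h1 : (Jac p θ)ᵀ.mulVec (fun _ => (1 : ℝ)) = 0 := by
    have hs : HasFDerivAt (fun x => ∑ i, p x i) (∑ i, fderiv ℝ (fun x => p x i) θ) θ :=
      HasFDerivAt.fun_sum fun i _ => (hd i).hasFDerivAt
    have hc : (fun x => ∑ i, p x i) = fun _ => (1 : ℝ) := funext fun x => (hpos x).2
    rw [hc] at hs
    have h0 := hs.unique (hasFDerivAt_const (1 : ℝ) θ)
    funext a
    have h2 := congrArg (fun L => L (Pi.single a (1 : ℝ))) h0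
    simpa [Matrix.mulVec, dotProduct, Jac, pd] using h2
  have hg : grad (fun x => KLdiv (p x) q) θ
      = (Jac p θ)ᵀ.mulVec (fun i => Real.log (p θ i / q i)) := by
    have hi : ∀ i, HasFDerivAt (fun x => p x i * Real.log (p x i / q i))
        ((Real.log (p θ i / q i) + 1) • fderiv ℝ (fun x => p x i) θ) θ := by
      intro i
      have hpi : p θ i ≠ 0 := ((hpos θ).1 i).ne'
      have hqi : q i ≠ 0 := (hq.1 i).ne'
      have h3 : HasDerivAt (fun y : ℝ => y * Real.log (y / q i))
          (Real.log (p θ i / q i) + 1) (p θ i) := by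
        have h4 := (hasDerivAt_id' (p θ i)).fun_mul
          (((hasDerivAt_id' (p θ i)).div_const (q i)).log (div_ne_zero hpi hqi))
        refine HasDerivAt.congr_deriv h4 ?_
        simp only [one_mul]
        field_simp
      exact h3.comp_hasFDerivAt θ (hd i).hasFDerivAt
    have hs : HasFDerivAt (fun x => KLdiv (p x) q)
        (∑ i, (Real.log (p θ i / q i) + 1) • fderiv ℝ (fun x => p x i) θ) θ := by
      unfold KLdiv
      exact HasFDerivAt.fun_sum fun i _ => hi i
    funext a
    have h2 := congrFun h1 a
    simp only [Matrix.mulVec, dotProduct, Jac, pd, Matrix.transpose_apply, Matrix.of_apply,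
      mul_one, Pi.zero_apply] at h2
    simp only [grad, pd, hs.fderiv, Matrix.mulVec, dotProduct, Jac, Matrix.transpose_apply,
      Matrix.of_apply, _root_.sum_apply, _root_.smul_apply,
      smul_eq_mul, add_mul, one_mul, Finset.sum_add_distrib, h2, add_zero]
    exact Finset.sum_congr rfl fun i _ => mul_comm _ _
  refine ⟨hg, h1, ?_⟩
  rw [hg]
  rfl

end
end StatRicci
end

section
/- (HWI inequality on parameter space.) Let (Θ,I,p) be a statistical model, q ∈ P_+(I), κ ∈ ℝ (not necessarily positive), and suppose the covariant Hessian bound H_W(θ) = ∇²_θ D_KL(p(θ)‖q) − Σ_k (∂_{θ_k}D_KL(p(θ)‖q))·Γ^{W,k}(θ) ⪰ κ G_W(θ) holds for all θ ∈ Θ. Let θ* be a minimizer of D_KL(p(·)‖q) on Θ and assume there is a constant-speed geodesic θ_t, t∈[0,1], of least energy joining θ_0 = θ and θ_1 = θ*, with energy g_W(θ̇_t,θ̇_t) = d_W(θ,θ*)². Then D_KL(p(θ)‖q) − D_KL(p(θ*)‖q) ≤ √(I(p(θ)‖q)) · d_W(θ,θ*) − (κ/2) · d_W(θ,θ*)²,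 where I(p(θ)‖q) = ∇_θ D_KL(p(θ)‖q)ᵀ G_W(θ)^{-1} ∇_θ D_KL(p(θ)‖q). -/
open Matrix Set

namespace StatRicci

noncomputable section

lemma fderiv_eq_sum_pd {d : ℕ} (f : (Fin d → ℝ) → ℝ) (x v : Fin d → ℝ) :
    fderiv ℝ f x v = ∑ a, pd f a x * v a := by
  conv_lhs => rw [pi_eq_sum_univ' v]
  rw [map_sum]
  refine Finset.sum_congr rfl fun a _ => ?_
  have : (fun j => if a = j then (1 : ℝ) else 0) = Pi.single a 1 := by
    ext j; simp [Pi.single_apply, eq_comm]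
  unfold pd
  simp [this, mul_comm]

lemma KL_contDiffAt {n d : ℕ} (p : (Fin d → ℝ) → Fin n → ℝ) (hp : ContDiff ℝ 2 p)
    (q : Fin n → ℝ) (hq : posProb q) (x : Fin d → ℝ) (hx : posProb (p x)) :
    ContDiffAt ℝ 2 (fun x => KLdiv (p x) q) x := by
  unfold KLdiv
  have hpi : ∀ i, ContDiffAt ℝ 2 (fun x => p x i) x := fun i =>
    (contDiff_pi.1 hp i).contDiffAt
  refine ContDiffAt.sum fun i _ => (hpi i).mul (ContDiffAt.log ((hpi i).div_const _) ?_)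
  exact (div_pos (hx.1 i) (hq.1 i)).ne'

lemma pd_differentiableAt {d : ℕ} (f : (Fin d → ℝ) → ℝ) (x : Fin d → ℝ) (a : Fin d)
    (hf : ContDiffAt ℝ 2 f x) : DifferentiableAt ℝ (pd f a) x := by
  have h1 : ContDiffAt ℝ 1 (fderiv ℝ f) x := hf.fderiv_right (by norm_num)
  have h2 := h1.differentiableAt (by norm_num)
  exact h2.clm_apply (differentiableAt_const _)

lemma comp_hasDerivAt {d : ℕ} (f : (Fin d → ℝ) → ℝ) (γ : ℝ → Fin d → ℝ) (t : ℝ)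
    (hf : DifferentiableAt ℝ f (γ t)) (hγ : DifferentiableAt ℝ γ t) :
    HasDerivAt (fun s => f (γ s)) (∑ a, pd f a (γ t) * deriv γ t a) t := by
  rw [← fderiv_eq_sum_pd]
  exact hf.hasFDerivAt.comp_hasDerivAt t hγ.hasDerivAt

lemma cauchy_posDef {d : ℕ} (G : Matrix (Fin d) (Fin d) ℝ) (hG : G.PosDef) (u v : Fin d → ℝ) :
    -(u ⬝ᵥ v) ≤ Real.sqrt (u ⬝ᵥ G⁻¹.mulVec u) * Real.sqrt (v ⬝ᵥ G.mulVec v) := by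
  have hdet : IsUnit G.det := (Matrix.isUnit_iff_isUnit_det G).1 hG.isUnit
  have hnn : ∀ w : Fin d → ℝ, 0 ≤ w ⬝ᵥ G.mulVec w := fun w => by
    simpa using hG.posSemidef.dotProduct_mulVec_nonneg w
  have hGT : Gᵀ = G := by simpa using hG.isHermitian.eq
  set w := G⁻¹.mulVec u with hw
  have hGw : G.mulVec w = u := by
    rw [hw, Matrix.mulVec_mulVec, Matrix.mul_nonsing_inv _ hdet, Matrix.one_mulVec]
  have hsym : w ⬝ᵥ G.mulVec v = u ⬝ᵥ v := by
    rw [Matrix.dotProduct_mulVec, ← Matrix.mulVec_transpose, hGT, hGw]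
  have ha : 0 ≤ u ⬝ᵥ w := by
    have := hnn w
    rwa [hGw, dotProduct_comm] at this
  have hpoly : ∀ s : ℝ, 0 ≤ (v ⬝ᵥ G.mulVec v) * (s * s) + (2 * (u ⬝ᵥ v)) * s + u ⬝ᵥ w := by
    intro s
    have := hnn (w + s • v)
    rw [Matrix.mulVec_add, Matrix.mulVec_smul, hGw] at this
    simp only [add_dotProduct, dotProduct_add, smul_dotProduct, dotProduct_smul,
      smul_eq_mul, hsym] at this
    rw [dotProduct_comm w u, dotProduct_comm v u] at this
    linarith
  have hd := discrim_le_zero hpoly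
  unfold discrim at hd
  rw [← Real.sqrt_mul ha]
  apply Real.le_sqrt_of_sq_le
  nlinarith

lemma taylor_conv (f f' f'' : ℝ → ℝ) (c : ℝ)
    (h1 : ∀ t ∈ Icc (0 : ℝ) 1, HasDerivAt f (f' t) t)
    (h2 : ∀ t ∈ Icc (0 : ℝ) 1, HasDerivAt f' (f'' t) t)
    (hc : ∀ t ∈ Icc (0 : ℝ) 1, c ≤ f'' t) :
    f 0 + f' 0 + c / 2 ≤ f 1 := by
  have key : ∀ g g' : ℝ → ℝ, (∀ t ∈ Icc (0 : ℝ) 1, HasDerivAt g (g' t) t) →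
      (∀ t ∈ Icc (0 : ℝ) 1, 0 ≤ g' t) → ∀ t ∈ Icc (0 : ℝ) 1, g 0 ≤ g t := by
    intro g g' hg hg' t ht
    have hm : MonotoneOn g (Icc 0 1) := by
      refine monotoneOn_of_hasDerivWithinAt_nonneg (convex_Icc 0 1) (f' := g')
        (fun t ht => (hg t ht).continuousAt.continuousWithinAt)
        (fun t ht => (hg t (interior_subset ht)).hasDerivWithinAt)
        (fun t ht => hg' t (interior_subset ht))
    exact hm (by simp) ht ht.1
  have s1 : ∀ t ∈ Icc (0 : ℝ) 1, f' 0 + c * t ≤ f' t := by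
    intro t ht
    have := key (fun t => f' t - c * t) (fun t => f'' t - c * 1)
      (fun t ht => (h2 t ht).sub ((hasDerivAt_id t).const_mul c))
      (fun t ht => by have := hc t ht; linarith) t ht
    linarith
  have := key (fun t => f t - (f' 0 * t + c / 2 * t ^ 2))
    (fun t => f' t - (f' 0 * 1 + c / 2 * (2 * t)))
    (fun t ht => by
      refine (h1 t ht).sub (((hasDerivAt_id t).const_mul (f' 0)).add ?_)
      have := (hasDerivAt_pow 2 t).const_mul (c / 2)
      simpa using this)
    (fun t ht => by have := s1 t ht; linarith) 1 (by simp)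
  linarith

/-- **HWI inequality on parameter space.** If the covariant Hessian bound
`H_W(θ) ⪰ κ G_W(θ)` holds on `Θ` (κ ∈ ℝ not necessarily positive), `θ*` is a minimizer of
the KL divergence, and `θ` is joined to `θ*` by a constant-speed geodesic of least energy
`g_W(θ̇,θ̇) = d_W(θ,θ*)²`, then
`D_KL(p(θ)‖q) − D_KL(p(θ*)‖q) ≤ √I(p(θ)‖q)·d_W(θ,θ*) − (κ/2) d_W(θ,θ*)²`. -/
theorem hwi_inequality {n d : ℕ} (ω : Fin n → Fin n → ℝ)
    (hω : isWeight ω) (hconn : isConn ω)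
    (S : Set (Fin d → ℝ))
    (p : (Fin d → ℝ) → Fin n → ℝ) (hp : ContDiff ℝ 2 p)
    (hpos : ∀ θ ∈ S, posProb (p θ))
    (hrank : ∀ θ ∈ S, (Jac p θ).rank = d)
    (hpd : ∀ θ ∈ S, (GW ω p θ).PosDef)
    (hGW : ∀ i j, ContDiff ℝ 1 (fun θ => GW ω p θ i j))
    (q : Fin n → ℝ) (hq : posProb q)
    (κ : ℝ) (hhess : ∀ θ ∈ S, matGE (HW ω p q θ) (κ • GW ω p θ))
    (θs : Fin d → ℝ) (hθs : θs ∈ S)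
    (hmin : ∀ θ ∈ S, KLdiv (p θs) q ≤ KLdiv (p θ) q) :
    ∀ θ ∈ S,
      (∃ γ : ℝ → Fin d → ℝ, IsGeodesicOn ω p S γ ∧ γ 0 = θ ∧ γ 1 = θs ∧
        ∀ t ∈ Icc (0 : ℝ) 1,
          deriv γ t ⬝ᵥ (GW ω p (γ t)).mulVec (deriv γ t) = dW2 ω p S θ θs) →
      KLdiv (p θ) q - KLdiv (p θs) q
        ≤ Real.sqrt (relFisher ω p q θ) * Real.sqrt (dW2 ω p S θ θs)
          - κ / 2 * dW2 ω p S θ θs := by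
  rintro θ hθ ⟨γ, ⟨hγ2, hγS, hgeo⟩, h0, h1, hE⟩
  set D := dW2 ω p S θ θs with hD
  set F : (Fin d → ℝ) → ℝ := fun x => KLdiv (p x) q with hF
  have hFc : ∀ t ∈ Icc (0 : ℝ) 1, ContDiffAt ℝ 2 F (γ t) := fun t ht =>
    KL_contDiffAt p hp q hq _ (hpos _ (hγS t ht))
  have hγd : ∀ t, DifferentiableAt ℝ γ t := fun t =>
    (hγ2.differentiable (by norm_num)) t
  have hγ' : ContDiff ℝ 1 (deriv γ) := by
    have : ContDiff ℝ (1 + 1) γ := by simpa [one_add_one_eq_two] using hγ2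
    exact (contDiff_succ_iff_deriv.1 this).2.2
  have hγdd : ∀ t k, HasDerivAt (fun s => deriv γ s k)
      (deriv (fun s => deriv γ s k) t) t := fun t k =>
    ((contDiff_pi.1 hγ' k).differentiable (by norm_num) t).hasDerivAt
  have hT := taylor_conv (fun t => F (γ t)) (fun t => ∑ a, pd F a (γ t) * deriv γ t a)
    (fun t => ∑ b, ((∑ a, pd (pd F b) a (γ t) * deriv γ t a) * deriv γ t b
      + pd F b (γ t) * deriv (fun s => deriv γ s b) t)) (κ * D)
    (fun t ht => comp_hasDerivAt F γ t ((hFc t ht).differentiableAt (by norm_num)) (hγd t))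
    (fun t ht => by
      refine HasDerivAt.fun_sum fun b _ => ?_
      exact (comp_hasDerivAt (pd F b) γ t (pd_differentiableAt F _ b (hFc t ht)) (hγd t)).mul
        (hγdd t b))
    (fun t ht => by
      have h := hhess _ (hγS t ht) (deriv γ t)
      rw [Matrix.smul_mulVec, dotProduct_smul, smul_eq_mul, hE t ht] at h
      refine h.trans (le_of_eq ?_)
      have hg : ∀ k, deriv (fun s => deriv γ s k) t
          = -∑ i, ∑ j, Christoffel ω p k (γ t) i j * deriv γ t i * deriv γ t j := fun k => by
        have := hgeo t ht k
        linarith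
      simp only [hg]
      generalize deriv γ t = v
      unfold HW
      rw [Matrix.sub_mulVec, dotProduct_sub, Finset.sum_add_distrib, sub_eq_add_neg]
      congr 1
      · simp only [dotProduct, Matrix.mulVec, hess, Matrix.of_apply, Finset.mul_sum,
          Finset.sum_mul]
        rw [Finset.sum_comm]
        refine Finset.sum_congr rfl fun b _ => Finset.sum_congr rfl fun a _ => ?_
        simp only [hF]
        ring
      · rw [Matrix.sum_mulVec, dotProduct_sum, ← Finset.sum_neg_distrib]
        refine Finset.sum_congr rfl fun k _ => ?_
        rw [Matrix.smul_mulVec, dotProduct_smul, smul_eq_mul, mul_neg]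
        congr 2
        simp only [dotProduct, Matrix.mulVec, Finset.mul_sum]
        refine Finset.sum_congr rfl fun i _ => Finset.sum_congr rfl fun j _ => ?_
        ring)
  have hCS := cauchy_posDef (GW ω p θ) (hpd θ hθ) (grad F θ) (deriv γ 0)
  have hE0 := hE 0 (by simp)
  rw [h0] at hE0
  rw [hE0] at hCS
  simp only [h0, h1] at hT
  change -(∑ a, pd F a θ * deriv γ 0 a) ≤ Real.sqrt (relFisher ω p q θ) * Real.sqrt D at hCS
  change F θ - F θs ≤ _
  linarith

end
end StatRicci
end

section
/- Let G=(I,E,ω) be a connected undirected weighted graph, let Θ ⊆ ℝ^d be open with d ≤ n−1, and let p: Θ → P_+(I) be continuously differentiable with Jacobian J_θp(θ) ∈ ℝ^{n×d} of full rank d at θ. Then the Wasserstein metric tensor G_W(θ) = J_θp(θ)ᵀ L(p(θ))^† J_θp(θ) is a symmetric positive definite d×d matrix. -/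
open Matrix Set

namespace StatRicci

noncomputable section

/-- Quadratic form of the Laplacian. -/
lemma Lap_quad {n : ℕ} (ω : Fin n → Fin n → ℝ) (q w : Fin n → ℝ) :
    w ⬝ᵥ (Lap ω q *ᵥ w) =
      ∑ i, ∑ j, if j < i then ω i j * lamW ω q i j * (w i - w j) ^ 2 else 0 := by
  have h1 : Lap ω q = ∑ i, ∑ j, if j < i then (ω i j * lamW ω q i j) •
      Matrix.vecMulVec (Pi.single i (1 : ℝ) - Pi.single j 1)
        (Pi.single i (1 : ℝ) - Pi.single j 1) else 0 := by
    ext k l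
    simp only [Lap, Matrix.of_apply, Matrix.sum_apply]
    refine Finset.sum_congr rfl fun i _ => Finset.sum_congr rfl fun j _ => ?_
    split_ifs <;> simp_all [Matrix.vecMulVec_apply, Pi.single_apply]
  rw [h1]
  simp only [Matrix.sum_mulVec, dotProduct_sum]
  refine Finset.sum_congr rfl fun i _ => Finset.sum_congr rfl fun j _ => ?_
  split_ifs
  · simp only [Matrix.smul_mulVec, Matrix.vecMulVec_mulVec, dotProduct_smul, dotProduct_sub,
      sub_dotProduct, single_dotProduct, dotProduct_single, smul_eq_mul]
    simp only [one_mul, mul_one, MulOpposite.op_sub, sub_smul, MulOpposite.smul_eq_mul_unop, 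
      MulOpposite.unop_op]
    ring
  · simp

lemma Lap_symm {n : ℕ} (ω : Fin n → Fin n → ℝ) (q : Fin n → ℝ) : (Lap ω q)ᵀ = Lap ω q := by
  ext k l
  simp only [Lap, Matrix.of_apply, Matrix.transpose_apply]
  refine Finset.sum_congr rfl fun i _ => Finset.sum_congr rfl fun j _ => ?_
  split_ifs <;> ring

/-- The all-ones matrix. -/
def onesM (n : ℕ) : Matrix (Fin n) (Fin n) ℝ := Matrix.of fun _ _ => 1

lemma onesM_symm (n : ℕ) : (onesM n)ᵀ = onesM n := by
  ext; simp [onesM]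

lemma onesM_sq (n : ℕ) : onesM n * onesM n = (n : ℝ) • onesM n := by
  ext; simp [onesM, Matrix.mul_apply]

lemma Lap_ones {n : ℕ} (ω : Fin n → Fin n → ℝ) (q : Fin n → ℝ) : Lap ω q * onesM n = 0 := by
  ext k m
  simp only [Lap, onesM, Matrix.mul_apply, Matrix.of_apply, mul_one, Matrix.zero_apply]
  rw [Finset.sum_comm]
  refine Finset.sum_eq_zero fun i _ => ?_
  rw [Finset.sum_comm]
  refine Finset.sum_eq_zero fun j _ => ?_
  by_cases hji : j < i
  · simp only [if_pos hji]
    rw [← Finset.mul_sum, ← Finset.mul_sum, Finset.sum_sub_distrib]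
    simp
  · simp [hji]

lemma dvol_nonneg {n : ℕ} {ω : Fin n → Fin n → ℝ} (hω : isWeight ω) (i : Fin n) :
    0 ≤ dvol ω i :=
  div_nonneg (Finset.sum_nonneg fun j _ => hω.2.1 i j)
    (Finset.sum_nonneg fun k _ => Finset.sum_nonneg fun j _ => hω.2.1 k j)

lemma dvol_pos {n : ℕ} {ω : Fin n → Fin n → ℝ} (hω : isWeight ω) {i j : Fin n}
    (h : 0 < ω i j) : 0 < dvol ω i := by
  have h1 : 0 < ∑ j, ω i j :=
    Finset.sum_pos' (fun j _ => hω.2.1 i j) ⟨j, Finset.mem_univ _, h⟩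
  exact div_pos h1 (Finset.sum_pos' (fun k _ => Finset.sum_nonneg fun j _ => hω.2.1 k j)
    ⟨i, Finset.mem_univ _, h1⟩)

lemma lamW_nonneg {n : ℕ} {ω : Fin n → Fin n → ℝ} (hω : isWeight ω) {q : Fin n → ℝ}
    (hq : posProb q) (i j : Fin n) : 0 ≤ lamW ω q i j := by
  have h1 := div_nonneg (hq.1 i).le (dvol_nonneg hω i)
  have h2 := div_nonneg (hq.1 j).le (dvol_nonneg hω j)
  unfold lamW
  linarith

lemma lamW_pos {n : ℕ} {ω : Fin n → Fin n → ℝ} (hω : isWeight ω) {q : Fin n → ℝ}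
    (hq : posProb q) {i j : Fin n} (h : 0 < ω i j) : 0 < lamW ω q i j := by
  have h1 := div_pos (hq.1 i) (dvol_pos hω h)
  have h2 := div_nonneg (hq.1 j).le (dvol_nonneg hω j)
  unfold lamW
  linarith

lemma term_nonneg {n : ℕ} {ω : Fin n → Fin n → ℝ} (hω : isWeight ω) {q : Fin n → ℝ}
    (hq : posProb q) (w : Fin n → ℝ) (i j : Fin n) :
    0 ≤ if j < i then ω i j * lamW ω q i j * (w i - w j) ^ 2 else 0 := by
  split_ifs
  · exact mul_nonneg (mul_nonneg (hω.2.1 i j) (lamW_nonneg hω hq i j)) (sq_nonneg _)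
  · exact le_rfl

lemma Lap_nonneg {n : ℕ} {ω : Fin n → Fin n → ℝ} (hω : isWeight ω) {q : Fin n → ℝ}
    (hq : posProb q) (w : Fin n → ℝ) : 0 ≤ w ⬝ᵥ (Lap ω q *ᵥ w) := by
  rw [Lap_quad]
  exact Finset.sum_nonneg fun i _ => Finset.sum_nonneg fun j _ => term_nonneg hω hq w i j

lemma Lap_ker {n : ℕ} {ω : Fin n → Fin n → ℝ} (hω : isWeight ω) (hc : isConn ω)
    {q : Fin n → ℝ} (hq : posProb q) {w : Fin n → ℝ} (h : w ⬝ᵥ (Lap ω q *ᵥ w) = 0)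
    (i j : Fin n) : w i = w j := by
  rw [Lap_quad] at h
  have h1 : ∀ i j, j < i → 0 < ω i j → w i = w j := by
    intro i j hij hpos
    have h2 := (Finset.sum_eq_zero_iff_of_nonneg (fun i _ =>
      Finset.sum_nonneg fun j _ => term_nonneg hω hq w i j)).1 h i (Finset.mem_univ _)
    have h3 := (Finset.sum_eq_zero_iff_of_nonneg
      (fun j _ => term_nonneg hω hq w i j)).1 h2 j (Finset.mem_univ _)
    rw [if_pos hij] at h3
    have h4 := (mul_pos hpos (lamW_pos hω hq hpos)).ne'
    have h5 := (mul_eq_zero.1 h3).resolve_left h4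
    exact sub_eq_zero.1 (pow_eq_zero_iff (two_ne_zero) |>.1 h5)
  have h2 : ∀ i j, 0 < ω i j → w i = w j := by
    intro i j hpos
    rcases lt_trichotomy i j with hij | hij | hij
    · exact (h1 j i hij (by rwa [hω.1 j i])).symm
    · rw [hij]
    · exact h1 i j hij hpos
  obtain ⟨walk⟩ := hc.preconnected i j
  induction walk with
  | nil => rfl
  | cons hadj _ ih =>
    refine Eq.trans ?_ ih
    rw [SimpleGraph.fromRel_adj] at hadj
    rcases hadj.2 with h | h
    · exact h2 _ _ h
    · exact (h2 _ _ h).symm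

lemma M_posDef {n : ℕ} {ω : Fin n → Fin n → ℝ} (hω : isWeight ω) (hc : isConn ω)
    {q : Fin n → ℝ} (hq : posProb q) : (Lap ω q + onesM n).PosDef := by
  refine Matrix.PosDef.of_dotProduct_mulVec_pos ?_ fun x hx => ?_
  · change (Lap ω q + onesM n)ᴴ = _
    rw [Matrix.conjTranspose_eq_transpose_of_trivial, Matrix.transpose_add, Lap_symm, onesM_symm]
  · have hU : x ⬝ᵥ (onesM n *ᵥ x) = (∑ i, x i) ^ 2 := by
      simp only [dotProduct, Matrix.mulVec, onesM, Matrix.of_apply, one_mul]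
      rw [← Finset.sum_mul, sq]
    rw [star_trivial, Matrix.add_mulVec, dotProduct_add, hU]
    have h1 := Lap_nonneg hω hq x
    have h2 := sq_nonneg (∑ i, x i)
    refine lt_of_le_of_ne (add_nonneg h1 h2) fun h0 => hx ?_
    have h3 : x ⬝ᵥ (Lap ω q *ᵥ x) = 0 := by linarith
    have h4 : (∑ i, x i) ^ 2 = 0 := by linarith
    have h5 := pow_eq_zero_iff (two_ne_zero) |>.1 h4
    funext i
    have h6 : ∑ j, x j = ∑ j : Fin n, x i :=
      Finset.sum_congr rfl fun j _ => Lap_ker hω hc hq h3 j i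
    rw [h6] at h5
    simp only [Finset.sum_const, Finset.card_univ, Fintype.card_fin, nsmul_eq_mul] at h5
    have hn : (n : ℝ) ≠ 0 := by
      have := i.pos
      positivity
    exact (mul_eq_zero.1 h5).resolve_left hn

lemma mpinv_spec {n : ℕ} (L : Matrix (Fin n) (Fin n) ℝ) (hn : (n : ℝ) ≠ 0) (hL : Lᵀ = L)
    (hLU : L * onesM n = 0) (hM : (L + onesM n).PosDef) :
    L * mpinv L * L = L := by
  have hdet : IsUnit (L + onesM n).det := (Matrix.isUnit_iff_isUnit_det _).1 hM.isUnit
  have hUL : onesM n * L = 0 := by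
    have := congrArg Matrix.transpose hLU
    rwa [Matrix.transpose_mul, hL, onesM_symm, Matrix.transpose_zero] at this
  set M := L + onesM n with hMdef
  have hMi := Matrix.mul_nonsing_inv M hdet
  have hiM := Matrix.nonsing_inv_mul M hdet
  have hMU : M * onesM n = (n : ℝ) • onesM n := by
    rw [hMdef, add_mul, hLU, zero_add, onesM_sq]
  have hUM : onesM n * M = (n : ℝ) • onesM n := by
    rw [hMdef, mul_add, hUL, zero_add, onesM_sq]
  have hiU : M⁻¹ * onesM n = (n : ℝ)⁻¹ • onesM n := by
    have : M⁻¹ * (M * onesM n) = onesM n := by rw [← mul_assoc, hiM, one_mul]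
    rw [hMU, Matrix.mul_smul] at this
    rw [eq_inv_smul_iff₀ hn, this]
  have hUi : onesM n * M⁻¹ = (n : ℝ)⁻¹ • onesM n := by
    have : onesM n * M * M⁻¹ = onesM n := by rw [mul_assoc, hMi, mul_one]
    rw [hUM, Matrix.smul_mul] at this
    rw [eq_inv_smul_iff₀ hn, this]
  have hLe : L = M - onesM n := by rw [hMdef, add_sub_cancel_right]
  set B := M⁻¹ - ((n : ℝ)⁻¹ * (n : ℝ)⁻¹) • onesM n with hB
  have hLB : L * B = 1 - (n : ℝ)⁻¹ • onesM n := by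
    rw [hB, mul_sub, Matrix.mul_smul, hLU, smul_zero, sub_zero, hLe, sub_mul, hMi, hUi]
  have hBL : B * L = 1 - (n : ℝ)⁻¹ • onesM n := by
    rw [hB, sub_mul, Matrix.smul_mul, hUL, smul_zero, sub_zero, hLe, mul_sub, hiM, hiU]
  have hUB : onesM n * B = 0 := by
    rw [hB, mul_sub, hUi, Matrix.mul_smul, onesM_sq, smul_smul, mul_assoc, inv_mul_cancel₀ hn,
      mul_one, sub_self]
  have hex : ∃ B : Matrix (Fin n) (Fin n) ℝ,
      L * B * L = L ∧ B * L * B = B ∧ (L * B)ᵀ = L * B ∧ (B * L)ᵀ = B * L := by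
    refine ⟨B, ?_, ?_, ?_, ?_⟩
    · rw [hLB, sub_mul, Matrix.smul_mul, hUL, smul_zero, sub_zero, one_mul]
    · rw [hBL, sub_mul, Matrix.smul_mul, hUB, smul_zero, sub_zero, one_mul]
    · rw [hLB, Matrix.transpose_sub, Matrix.transpose_smul, onesM_symm, Matrix.transpose_one]
    · rw [hBL, Matrix.transpose_sub, Matrix.transpose_smul, onesM_symm, Matrix.transpose_one]
  unfold mpinv
  rw [dif_pos hex]
  exact hex.choose_spec.1

lemma ones_Jac {n d : ℕ} (p : (Fin d → ℝ) → Fin n → ℝ) (hp : ContDiff ℝ 1 p)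
    (hpos : ∀ θ, posProb (p θ)) (θ : Fin d → ℝ) : onesM n * Jac p θ = 0 := by
  ext k a
  simp only [onesM, Jac, pd, Matrix.mul_apply, Matrix.of_apply, one_mul, Matrix.zero_apply]
  have hdiff : ∀ i ∈ (Finset.univ : Finset (Fin n)),
      DifferentiableAt ℝ (fun x => p x i) θ := fun i _ =>
    differentiableAt_pi.1 ((hp.differentiable (by norm_num)) θ) i
  have h1 : fderiv ℝ (fun x => ∑ i, p x i) θ = ∑ i, fderiv ℝ (fun x => p x i) θ :=
    fderiv_fun_sum hdiff
  have h2 : (fun x => ∑ i, p x i) = fun _ => (1 : ℝ) := funext fun x => (hpos x).2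
  rw [h2, fderiv_fun_const] at h1
  have h3 := congrArg (fun f => f (Pi.single a 1)) h1
  simpa using h3.symm

lemma inj_of_rank {n d : ℕ} (A : Matrix (Fin n) (Fin d) ℝ) (h : A.rank = d) :
    Function.Injective A.mulVec := by
  have h1 := LinearMap.finrank_range_add_finrank_ker A.mulVecLin
  rw [show Module.finrank ℝ (LinearMap.range A.mulVecLin) = d from h] at h1
  simp only [Module.finrank_fin_fun] at h1
  have h2 : Module.finrank ℝ (LinearMap.ker A.mulVecLin) = 0 := by omega
  have h3 := LinearMap.ker_eq_bot.1 (Submodule.finrank_eq_zero.1 h2)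
  exact h3

/-- For a connected weighted graph, `d ≤ n − 1`, and a continuously
differentiable parametrization `p : Θ → P₊(I)` whose Jacobian has full rank `d` at `θ`,
the Wasserstein metric tensor `G_W(θ) = J_θp(θ)ᵀ L(p(θ))† J_θp(θ)` is a symmetric
positive definite `d×d` matrix. -/
theorem GW_symm_posdef {n d : ℕ} (ω : Fin n → Fin n → ℝ)
    (hω : isWeight ω) (hconn : isConn ω) (hd : d + 1 ≤ n)
    (p : (Fin d → ℝ) → Fin n → ℝ) (hp : ContDiff ℝ 1 p)
    (hpos : ∀ θ, posProb (p θ))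
    (θ : Fin d → ℝ) (hrank : (Jac p θ).rank = d) :
    (GW ω p θ).IsSymm ∧ (GW ω p θ).PosDef := by
  have hn : (n : ℝ) ≠ 0 := by
    have : 0 < n := by omega
    positivity
  have hM := M_posDef hω hconn (hpos θ)
  have hL := Lap_symm ω (p θ)
  have hLU := Lap_ones ω (p θ)
  have hpin := mpinv_spec _ hn hL hLU hM
  have hUJ := ones_Jac p hp hpos θ
  have hinj := inj_of_rank _ hrank
  unfold GW
  generalize Jac p θ = J at *
  generalize Lap ω (p θ) = L at *
  have hdet : IsUnit (L + onesM n).det := (Matrix.isUnit_iff_isUnit_det _).1 hM.isUnit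
  have hUL : onesM n * L = 0 := by
    have := congrArg Matrix.transpose hLU
    rwa [Matrix.transpose_mul, hL, onesM_symm, Matrix.transpose_zero] at this
  obtain ⟨W, hW⟩ : ∃ W, (L + onesM n) * W = J :=
    ⟨(L + onesM n)⁻¹ * J, by rw [← Matrix.mul_assoc, Matrix.mul_nonsing_inv _ hdet, Matrix.one_mul]⟩
  have hUW : onesM n * W = 0 := by
    have h := hUJ
    rw [← hW, ← Matrix.mul_assoc, mul_add, hUL, zero_add, onesM_sq, Matrix.smul_mul] at h
    exact (smul_eq_zero.1 h).resolve_left hn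
  have hLW : L * W = J := by rw [← hW, Matrix.add_mul, hUW, add_zero]
  have hG : Jᵀ * mpinv L * J = Wᴴ * (L + onesM n) * W := by
    rw [Matrix.conjTranspose_eq_transpose_of_trivial, Matrix.mul_assoc Wᵀ, hW, ← hLW,
      Matrix.transpose_mul, hL]
    calc Wᵀ * L * mpinv L * (L * W) = Wᵀ * (L * mpinv L * L) * W := by
          simp only [Matrix.mul_assoc]
      _ = _ := by rw [hpin, Matrix.mul_assoc]
  have hWinj : Function.Injective W.mulVec := by
    intro x y hxy
    apply hinj
    simp only [← hLW, ← Matrix.mulVec_mulVec]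
    exact congrArg _ hxy
  have hP : (Jᵀ * mpinv L * J).PosDef := by
    rw [hG]
    exact hM.conjTranspose_mul_mul_same hWinj
  refine ⟨?_, hP⟩
  have := hP.isHermitian
  rwa [Matrix.IsHermitian, Matrix.conjTranspose_eq_transpose_of_trivial] at this

end
end StatRicci
end
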